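/- Let π be a permutation gate in 𝒞₃ in staircase form, and let the corresponding descending multiplication on 𝔽₂ⁿ be defined by eᵢeⱼ := π(eᵢ+eⱼ) + eᵢ + eⱼ extended bilinearly. Then the following are equivalent: (1) π is semi-Clifford; (2) π⁻¹ ∈ 𝒞₃; (3) every coordinate of the polynomial representation of π has degree at most 2; (4) eᵢeⱼeₖ = 0 for all indices i, j, k ∈ [n]. -/

import Mathlib

/-! Common framework: qubit gates, the Pauli group, the Clifford hierarchy,
permutation gates, Toffoli gates and staircase form, descending multiplications,
multilinear polynomial representations. -/

/-- Vectors in `𝔽₂ⁿ`, indexing computational basis states. -/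
abbrev QV (n : ℕ) := Fin n → ZMod 2

/-- `n`-qubit gates: `2ⁿ × 2ⁿ` complex matrices indexed by `𝔽₂ⁿ`. -/
abbrev QMat (n : ℕ) := Matrix (QV n) (QV n) ℂ

/-- Standard basis vector `eᵢ` of `𝔽₂ⁿ`. -/
def stdBasis (n : ℕ) (i : Fin n) : QV n := fun m => if m = i then 1 else 0

/-- The gate `X^u Z^z`, sending `|b⟩` to `(-1)^(z·b) |b+u⟩`. -/
noncomputable def XZGate (n : ℕ) (u z : QV n) : QMat n :=
  fun a b => if a = b + u then (-1 : ℂ) ^ (∑ i, (z i).val * (b i).val) else 0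

/-- The Pauli group on `n` qubits: gates `c·P₁⊗⋯⊗Pₙ`, `c ∈ {±1, ±i}`,
`Pᵢ ∈ {I,X,Y,Z}`, equivalently phases times `X^u Z^z`. -/
def PauliGroup (n : ℕ) : Set (QMat n) :=
  { P | ∃ (c : ℂ) (u z : QV n),
      (c = 1 ∨ c = -1 ∨ c = Complex.I ∨ c = -Complex.I) ∧ P = c • XZGate n u z }

/-- Level `k` of the Clifford hierarchy `𝒞ₖ` (level 1 is the Pauli group,
level 2 the Clifford group; level 0 is junk/empty). -/
def CliffordLevel (n : ℕ) : ℕ → Set (QMat n)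
  | 0 => ∅
  | 1 => PauliGroup n
  | (k+2) => { U | U ∈ Matrix.unitaryGroup (QV n) ℂ ∧
      ∀ P ∈ PauliGroup n, U * P * star U ∈ CliffordLevel n (k+1) }

/-- The permutation gate of a permutation `f` of `𝔽₂ⁿ`: sends `|v⟩` to `|f v⟩`. -/
noncomputable def permGate (n : ℕ) (f : QV n ≃ QV n) : QMat n :=
  fun a b => if a = f b then 1 else 0

/-- A diagonal gate. -/
def IsDiagonal (n : ℕ) (d : QMat n) : Prop := ∀ a b : QV n, a ≠ b → d a b = 0

/-- A gate is semi-Clifford if it equals `φ₁ d φ₂` for Clifford `φ₁, φ₂` and diagonal `d`. -/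
def IsSemiClifford (n : ℕ) (U : QMat n) : Prop :=
  ∃ φ₁ d φ₂ : QMat n, φ₁ ∈ CliffordLevel n 2 ∧ φ₂ ∈ CliffordLevel n 2 ∧
    IsDiagonal n d ∧ U = φ₁ * d * φ₂

/-- The underlying map of the Toffoli gate `TOF_{i,j,k}`: `v ↦ v + (vᵢvⱼ)·eₖ`. -/
def tofFun (n : ℕ) (i j k : Fin n) (v : QV n) : QV n :=
  fun m => if m = k then v m + v i * v j else v m

/-- A map on `𝔽₂ⁿ` is in staircase form if it is a product (applied left-to-right)
of pairwise distinct Toffoli gates `TOF_{i,j,k}` with `i<j<k` and with targets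
nondecreasing in the order the gates are applied. -/
def IsStaircase (n : ℕ) (g : QV n → QV n) : Prop :=
  ∃ L : List (Fin n × Fin n × Fin n),
    L.Nodup ∧
    (∀ t ∈ L, t.1 < t.2.1 ∧ t.2.1 < t.2.2) ∧
    List.Chain' (fun s t => s.2.2 ≤ t.2.2) L ∧
    g = fun v => L.foldl (fun w t => tofFun n t.1 t.2.1 t.2.2 w) v

/-- A descending multiplication on `𝔽₂ⁿ`: bilinear, associative, commutative,
`eᵢeᵢ = 0`, and for `i < j`, `eᵢeⱼ ∈ span{eₖ : k > j}`. -/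
def IsDescendingMul (n : ℕ) (mul : QV n → QV n → QV n) : Prop :=
  (∀ u v w : QV n, mul (u + v) w = mul u w + mul v w) ∧
  (∀ u v w : QV n, mul u (v + w) = mul u v + mul u w) ∧
  (∀ u v w : QV n, mul (mul u v) w = mul u (mul v w)) ∧
  (∀ u v : QV n, mul u v = mul v u) ∧
  (∀ i : Fin n, mul (stdBasis n i) (stdBasis n i) = 0) ∧
  (∀ i j : Fin n, i < j → ∀ m : Fin n, m ≤ j → mul (stdBasis n i) (stdBasis n j) m = 0)

/-- The product `∏_{i ∈ l} eᵢ` under a multiplication, for a list `l` (junk `0` on `[]`). -/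
def dmProdList (n : ℕ) (mul : QV n → QV n → QV n) : List (Fin n) → QV n
  | [] => 0
  | [i] => stdBasis n i
  | i :: j :: rest => mul (stdBasis n i) (dmProdList n mul (j :: rest))

/-- The product `∏_{i ∈ T} eᵢ` under a multiplication. -/
def dmProd (n : ℕ) (mul : QV n → QV n → QV n) (T : Finset (Fin n)) : QV n :=
  dmProdList n mul (T.sort (· ≤ ·))

/-- `g` is the map `∑_{i∈S} eᵢ ↦ ∑_{∅≠T⊆S} ∏_{i∈T} eᵢ` associated to a multiplication. -/
def dmPiSpec (n : ℕ) (mul : QV n → QV n → QV n) (g : QV n → QV n) : Prop :=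
  ∀ S : Finset (Fin n),
    g (∑ i ∈ S, stdBasis n i) = ∑ T ∈ S.powerset.erase ∅, dmProd n mul T

/-- The bilinear extension of `eᵢeⱼ := g(eᵢ+eⱼ) + eᵢ + eⱼ`. -/
def inducedMul (n : ℕ) (g : QV n → QV n) (u v : QV n) : QV n :=
  ∑ i : Fin n, ∑ j : Fin n,
    (u i * v j) • (g (stdBasis n i + stdBasis n j) + stdBasis n i + stdBasis n j)

/-- Coefficient of the monomial `∏_{i∈T} aᵢ` in the unique multilinear polynomial
over `𝔽₂` representing `g : 𝔽₂ⁿ → 𝔽₂` (Möbius inversion over `𝔽₂`). -/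
def mlCoeff (n : ℕ) (g : QV n → ZMod 2) (T : Finset (Fin n)) : ZMod 2 :=
  ∑ R ∈ T.powerset, g (∑ i ∈ R, stdBasis n i)

/-- Strictly lower triangular matrix. -/
def StrictLowerTri (n : ℕ) (A : Matrix (Fin n) (Fin n) (ZMod 2)) : Prop :=
  ∀ p q : Fin n, p ≤ q → A p q = 0

/-- Multiplication of basis vectors for the gate `U_k`: the basis of `𝔽₂^(2^k-1)` is
indexed by nonempty subsets `S ⊆ [k]`, encoded as indices `a` via the binary digits of
`a+1`; `e_S e_T = e_{S∪T}` if `S ∩ T = ∅` and `e_S e_T = 0` otherwise. -/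
def ukBasisMul (k : ℕ) (a b : Fin (2 ^ k - 1)) : QV (2 ^ k - 1) :=
  if (a.val + 1) &&& (b.val + 1) = 0 then
    (if h : a.val + b.val + 1 < 2 ^ k - 1 then stdBasis (2 ^ k - 1) ⟨a.val + b.val + 1, h⟩
     else 0)
  else 0

/-- The descending multiplication defining `U_k`, extended bilinearly. -/
def ukMul (k : ℕ) (u v : QV (2 ^ k - 1)) : QV (2 ^ k - 1) :=
  ∑ a : Fin (2 ^ k - 1), ∑ b : Fin (2 ^ k - 1), (u a * v b) • ukBasisMul k a b

/-! A permutation `f` fixing `0` lies in `𝒞₃` exactly when the maps `x ↦ f(f⁻¹ x + u)` are affine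
and `f⁻¹` is quadratic. The first condition says that `f` carries addition to the circle operation
`a + b + ab` of a commutative associative algebra with `aa = 0`. In this algebra the condition
`abc = 0` means that `f` is quadratic, and it also makes the maps `x ↦ f⁻¹(f x + u)` affine, so it
is equivalent to `f⁻¹ ∈ 𝒞₃`. If moreover `f` fixes the `eᵢ`, the sum of `f` over the subcube spanned
by a nonempty set of `eᵢ`, which is a coefficient of the polynomial representation of `f`, is the
product of these `eᵢ`.

If the gate is `φ₁ d φ₂`, then `d*` is the entrywise complex conjugate of `d`, and complex
conjugation preserves every level of the hierarchy; hence the inverse lies in `𝒞₃` as well.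
Conversely, if `abc = 0`, then `ψ x := (f x) · (-)` is additive in `x`. In a basis containing a
basis of `ker ψ`, and up to a linear map applied after it, `f` commutes with translation by the
basis vectors in `ker ψ` and preserves the coordinates at the other ones. Hadamard gates on the
qubits of the former therefore make it diagonal. -/

section Affine

variable {G A B : Type*} [AddCommGroup G] [AddCommGroup A] [AddCommGroup B]

/-- Affine maps between abelian groups, that is, additive maps up to a constant. Between vector
spaces over `𝔽₂` these are the affine-linear maps. -/
def IsAffine (g : G → A) : Prop :=
  ∀ x y, g (x + y) = g x + g y - g 0

/-- Maps all of whose finite differences are affine. Between vector spaces over `𝔽₂` these are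
the maps given by polynomials of degree at most 2. -/
def IsQuadratic (q : G → A) : Prop :=
  ∀ u, IsAffine fun x => q (x + u) - q x

theorem IsAffine.map_sub {g : G → A} (hg : IsAffine g) (x y : G) :
    g (x - y) = g x - g y + g 0 := by
  have h := hg (x - y) y
  rw [sub_add_cancel] at h
  rw [h]
  abel

theorem IsAffine.comp {g : A → B} {p : G → A} (hg : IsAffine g) (hp : IsAffine p) :
    IsAffine fun x => g (p x) := fun x y => by
  simp only [hp x y, hg.map_sub, hg (p x)]
  abel

theorem IsAffine.add {p q : G → A} (hp : IsAffine p) (hq : IsAffine q) :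
    IsAffine fun x => p x + q x := fun x y => by
  simp only [hp x y, hq x y]
  abel

theorem IsAffine.symm {g : G ≃ A} (hg : IsAffine g) : IsAffine g.symm := fun a b => by
  rw [Equiv.symm_apply_eq, hg.map_sub, hg]
  simp

end Affine

section CircleHom

variable {R G A : Type*} [CommRing R] [AddCommGroup G] [AddCommGroup A] [Module R A]

/-- The map `f` carries addition to the circle operation `a ∘ b = a + b + ab` of the bilinear
product `ab = μ a b`; formally, `1 + f` is multiplicative. -/
def IsCircleHom (μ : A →ₗ[R] A →ₗ[R] A) (f : G → A) : Prop :=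
  ∀ x y, f (x + y) = f x + f y + μ (f x) (f y)

/-- The condition `abc = 0` on a bilinear product `ab = μ a b`. -/
def IsTwoStepNilpotent (μ : A →ₗ[R] A →ₗ[R] A) : Prop :=
  ∀ a b c, μ (μ a b) c = 0

theorem isTwoStepNilpotent_iff_basis {ι : Type*} {μ : A →ₗ[R] A →ₗ[R] A}
    (b : Module.Basis ι R A) :
    IsTwoStepNilpotent μ ↔ ∀ i j k, μ (μ (b i) (b j)) (b k) = 0 := by
  refine ⟨fun hμ i j k => hμ _ _ _, fun hb x y z => ?_⟩
  have h : μ.compr₂ μ = 0 := b.ext fun i => b.ext fun j => b.ext fun k => hb i j k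
  exact congr($h x y z)

/-- The sum of `f` over the subcube spanned by `v i`, `i ∈ T`. For `v` the standard basis of `𝔽₂ⁿ`
this is the coefficient of `∏ i ∈ T, Xᵢ` in the multilinear polynomial representing `f`. -/
def cubeSum {ι : Type*} (f : G → A) (v : ι → G) (T : Finset ι) : A :=
  ∑ S ∈ T.powerset, f (∑ i ∈ S, v i)

namespace IsCircleHom

variable {μ : A →ₗ[R] A →ₗ[R] A} {f : G ≃ A}

protected theorem map_zero (h : IsCircleHom μ f) : f 0 = 0 := by
  have := h (f.symm 0) 0
  simpa using this.symm

theorem map_add_of_mul_eq_zero (h : IsCircleHom μ f) {w : G} (hw : μ (f w) = 0) (x : G) :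
    f (w + x) = f w + f x := by
  rw [h, hw, LinearMap.zero_apply, add_zero]

protected theorem mul_comm (h : IsCircleHom μ f) (a b : A) : μ a b = μ b a := by
  obtain ⟨x, rfl⟩ := f.surjective a
  obtain ⟨y, rfl⟩ := f.surjective b
  have hxy := h x y
  rw [add_comm x, h, add_comm (f y)] at hxy
  exact (add_left_cancel hxy).symm

protected theorem mul_assoc (h : IsCircleHom μ f) (a b c : A) : μ (μ a b) c = μ a (μ b c) := by
  obtain ⟨x, rfl⟩ := f.surjective a
  obtain ⟨y, rfl⟩ := f.surjective b
  obtain ⟨z, rfl⟩ := f.surjective c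
  have hxyz : f (x + y + z) = f (x + (y + z)) := by rw [add_assoc]
  simp only [h _ _, map_add, LinearMap.add_apply] at hxyz
  rw [← sub_eq_zero] at hxyz ⊢
  rw [← hxyz]
  abel

theorem isTwoStepNilpotent_iff_isQuadratic (h : IsCircleHom μ f) :
    IsTwoStepNilpotent μ ↔ IsQuadratic f := by
  have key (x y u : G) : (f (x + y + u) - f (x + y) = f (x + u) - f x + (f (y + u) - f y)
      - (f (0 + u) - f 0)) ↔ μ (μ (f x) (f y)) (f u) = 0 := by
    rw [← sub_eq_zero]
    simp only [h _ _, h.map_zero, map_zero, map_add, LinearMap.add_apply,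
      LinearMap.zero_apply]
    abel_nf
  simp only [IsTwoStepNilpotent, IsQuadratic, IsAffine, key, f.surjective.forall]
  exact ⟨fun hf u x y => hf x y u, fun hf x y u => hf u x y⟩

theorem symm_add (h : IsCircleHom μ f) (hμ : IsTwoStepNilpotent μ) (a b : A) :
    f.symm (a + b) = f.symm a + f.symm b + f.symm (-μ a b) := by
  have hμ' (c : A) : μ c (μ a b) = 0 := by rw [h.mul_comm, hμ]
  simp [Equiv.symm_apply_eq, h _ _, hμ']

/-- By `symm_add`, `f⁻¹(f x + u) = x + f⁻¹ u + f⁻¹(-μ (f x) u)`, and the last term is additive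
in `x`. -/
theorem isAffine_symm_conj (h : IsCircleHom μ f) (hμ : IsTwoStepNilpotent μ) (u : A) :
    IsAffine fun x => f.symm (f x + u) := by
  have hadd (x y : G) : f.symm (-μ (f (x + y)) u)
      = f.symm (-μ (f x) u) + f.symm (-μ (f y) u) := by
    simp [Equiv.symm_apply_eq, h _ _, hμ _ _ _]
    abel
  have h0 : f.symm 0 = 0 := by rw [Equiv.symm_apply_eq, h.map_zero]
  intro x y
  simp only [h.symm_add hμ, Equiv.symm_apply_apply, hadd, h.map_zero, map_zero,
    LinearMap.zero_apply, neg_zero, h0]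
  abel

end IsCircleHom

end CircleHom

section CharTwo

variable {G A : Type*} [AddCommGroup G] [AddCommGroup A] [Module (ZMod 2) A]

/-- The product is `ab = f(f⁻¹ a + f⁻¹ b) - a - b`. -/
theorem exists_isCircleHom {f : G ≃ A} (h0 : f 0 = 0)
    (hf : ∀ u, IsAffine fun a => f (f.symm a + u)) :
    ∃ μ : A →ₗ[ZMod 2] A →ₗ[ZMod 2] A, IsCircleHom μ f := by
  have h0' : f.symm 0 = 0 := by rw [Equiv.symm_apply_eq, h0]
  let mul (a b : A) : A := f (f.symm a + f.symm b) - a - b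
  have mul_comm (a b : A) : mul a b = mul b a := by
    simp only [mul, add_comm (f.symm a), sub_right_comm]
  have add_mul (a a' b : A) : mul (a + a') b = mul a b + mul a' b := by
    have := hf (f.symm b) a a'
    simp only [mul, this, h0', zero_add, Equiv.apply_symm_apply]
    abel
  let mulHom : A →+ A →ₗ[ZMod 2] A := AddMonoidHom.mk'
    (fun a => (AddMonoidHom.mk' (mul a) fun b b' => by
      rw [mul_comm, add_mul, mul_comm b, mul_comm b']).toZModLinearMap 2)
    fun a a' => LinearMap.ext fun b => add_mul a a' b
  refine ⟨mulHom.toZModLinearMap 2, fun x y => ?_⟩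
  have : f (x + y) = f x + f y + mul (f x) (f y) := by simp [mul]
  exact this

namespace IsCircleHom

variable {μ : A →ₗ[ZMod 2] A →ₗ[ZMod 2] A} {f : G ≃ A}

protected theorem mul_self [Module (ZMod 2) G] (h : IsCircleHom μ f) (a : A) : μ a a = 0 := by
  obtain ⟨x, rfl⟩ := f.surjective a
  simpa [ZModModule.add_self, h.map_zero] using (h x x).symm

section CubeSum

variable {ι : Type*} {v : ι → G}

theorem cubeSum_singleton (h : IsCircleHom μ f) (i : ι) : cubeSum f v {i} = f (v i) := by
  classical
  rw [← insert_empty_eq, cubeSum, Finset.sum_powerset_insert (Finset.notMem_empty i)]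
  simp [h.map_zero]

theorem cubeSum_insert [DecidableEq ι] (h : IsCircleHom μ f) {i : ι} {T : Finset ι}
    (hT : T.Nonempty) (hi : i ∉ T) : cubeSum f v (insert i T) = μ (f (v i)) (cubeSum f v T) := by
  have hterm : ∀ S ∈ T.powerset, f (∑ k ∈ insert i S, v k)
      = f (v i) + f (∑ k ∈ S, v k) + μ (f (v i)) (f (∑ k ∈ S, v k)) := fun S hS => by
    rw [Finset.sum_insert fun hiS => hi (Finset.mem_powerset.1 hS hiS), h]
  have heven : (2 ^ T.card) • f (v i) = 0 := by
    obtain ⟨m, hm⟩ := Nat.exists_eq_succ_of_ne_zero hT.card_ne_zero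
    rw [hm, pow_succ, mul_nsmul, two_nsmul, ← nsmul_add, ZModModule.add_self, nsmul_zero]
  rw [cubeSum, Finset.sum_powerset_insert hi, Finset.sum_congr rfl hterm, Finset.sum_add_distrib,
    Finset.sum_add_distrib, Finset.sum_const, Finset.card_powerset, heven, zero_add, ← add_assoc,
    ZModModule.add_self, zero_add, cubeSum, map_sum]

theorem cubeSum_triple [DecidableEq ι] (h : IsCircleHom μ f) {i j k : ι} (hij : i ≠ j)
    (hik : i ≠ k) (hjk : j ≠ k) : cubeSum f v {i, j, k} = μ (μ (f (v i)) (f (v j))) (f (v k)) := by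
  rw [h.cubeSum_insert (Finset.insert_nonempty j {k}) (by simp [hij, hik]),
    h.cubeSum_insert (Finset.singleton_nonempty k) (by simp [hjk]), h.cubeSum_singleton,
    h.mul_assoc]

theorem cubeSum_eq_zero (h : IsCircleHom μ f) (hμ : IsTwoStepNilpotent μ) {T : Finset ι}
    (hT : 2 < T.card) : cubeSum f v T = 0 := by
  classical
  obtain ⟨i, hi, j, hj, k, hk, hij, hik, hjk⟩ := Finset.two_lt_card.1 hT
  have hk' : k ∈ (T.erase i).erase j := by simp [hk, hik.symm, hjk.symm]
  rw [← Finset.insert_erase hi, ← Finset.insert_erase (Finset.mem_erase.2 ⟨hij.symm, hj⟩),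
    h.cubeSum_insert (Finset.insert_nonempty ..) (by simp [hij]),
    h.cubeSum_insert ⟨k, hk'⟩ (Finset.notMem_erase _ _), ← h.mul_assoc, hμ]

theorem isTwoStepNilpotent_iff_cubeSum [Module (ZMod 2) G] (h : IsCircleHom μ f)
    (b : Module.Basis ι (ZMod 2) A) (hv : ∀ i, f (v i) = b i) :
    IsTwoStepNilpotent μ ↔ ∀ T, 2 < T.card → cubeSum f v T = 0 := by
  classical
  refine ⟨fun hμ T hT => h.cubeSum_eq_zero hμ hT, fun hcube => ?_⟩
  refine (isTwoStepNilpotent_iff_basis b).2 fun i j k => ?_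
  rcases eq_or_ne i j with rfl | hij
  · rw [h.mul_self, map_zero, LinearMap.zero_apply]
  rcases eq_or_ne j k with rfl | hjk
  · rw [h.mul_assoc, h.mul_self, map_zero]
  rcases eq_or_ne i k with rfl | hik
  · rw [h.mul_comm, ← h.mul_assoc, h.mul_self, map_zero, LinearMap.zero_apply]
  rw [← hv, ← hv, ← hv, ← h.cubeSum_triple hij hik hjk]
  exact hcube _ (by rw [Finset.card_eq_three.2 ⟨i, j, k, hij, hik, hjk, rfl⟩]; decide)

end CubeSum

end IsCircleHom

end CharTwo

/-- The sign `x ↦ (-1)ˣ`. -/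
noncomputable def signChar : AddChar (ZMod 2) ℂ :=
  AddChar.zmodChar 2 (by norm_num : (-1 : ℂ) ^ 2 = 1)

theorem signChar_one : signChar 1 = -1 :=
  pow_one (-1)

theorem signChar_eq_one_or (x : ZMod 2) : signChar x = 1 ∨ signChar x = -1 :=
  neg_one_pow_eq_or ℂ x.val

theorem signChar_injective : Function.Injective signChar := fun x y h => by
  match x, y with
  | 0, 0 | 1, 1 => rfl
  | 0, 1 | 1, 0 => norm_num [signChar_one] at h

theorem signChar_ne_zero (x : ZMod 2) : signChar x ≠ 0 := by
  rcases signChar_eq_one_or x with h | h <;> simp [h]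

theorem star_signChar (x : ZMod 2) : star (signChar x) = signChar x := by
  rcases signChar_eq_one_or x with h | h <;> simp [h]

theorem signChar_pow_four (x : ZMod 2) : signChar x ^ 4 = 1 := by
  rcases signChar_eq_one_or x with h | h <;> norm_num [h]

section SignedPerm

variable {V : Type*} [DecidableEq V]

/-- The monomial gate `|b⟩ ↦ (-1)^(q b) |g b⟩`. -/
noncomputable def signedPerm (g : V ≃ V) (q : V → ZMod 2) : Matrix V V ℂ :=
  fun a b => if a = g b then signChar (q b) else 0

theorem star_signedPerm (g : V ≃ V) (q : V → ZMod 2) :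
    star (signedPerm g q) = signedPerm g.symm fun a => q (g.symm a) := by
  ext a b
  simp only [Matrix.star_apply, signedPerm, Equiv.eq_symm_apply, apply_ite star, star_signChar,
    star_zero, eq_comm (a := b)]
  by_cases h : g a = b
  · simp [← h]
  · simp [h]

theorem map_star_signedPerm (g : V ≃ V) (q : V → ZMod 2) :
    (signedPerm g q).map star = signedPerm g q := by
  ext a b
  simp only [Matrix.map_apply, signedPerm, apply_ite star, star_signChar, star_zero]

theorem signedPerm_refl_zero : signedPerm (Equiv.refl V) 0 = 1 := by
  ext a b
  simp [signedPerm, Matrix.one_apply]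

theorem signedPerm_const_add (g : V ≃ V) (c : ZMod 2) (q : V → ZMod 2) :
    signedPerm g (fun b => c + q b) = signChar c • signedPerm g q := by
  ext a b
  by_cases hab : a = g b <;> simp [signedPerm, hab, AddChar.map_add_eq_mul]

variable [Fintype V]

theorem signedPerm_mul (g h : V ≃ V) (q r : V → ZMod 2) :
    signedPerm g q * signedPerm h r = signedPerm (h.trans g) fun b => q (h b) + r b := by
  ext a b
  simp [signedPerm, Matrix.mul_apply, AddChar.map_add_eq_mul]

theorem signedPerm_mem_unitaryGroup (g : V ≃ V) (q : V → ZMod 2) :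
    signedPerm g q ∈ Matrix.unitaryGroup V ℂ := by
  rw [Matrix.mem_unitaryGroup_iff, star_signedPerm, signedPerm_mul, ← signedPerm_refl_zero]
  congr 1
  · simp
  · ext; simp [ZModModule.add_self]

end SignedPerm

section Pauli

variable {n : ℕ}

theorem permGate_eq_signedPerm (f : QV n ≃ QV n) : permGate n f = signedPerm f 0 := by
  ext a b
  simp [permGate, signedPerm]

theorem XZGate_eq_signedPerm (u z : QV n) :
    XZGate n u z = signedPerm (Equiv.addRight u) (z ⬝ᵥ ·) := by
  ext a b
  have h : z ⬝ᵥ b = ((∑ i, (z i).val * (b i).val : ℕ) : ZMod 2) := by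
    simp [dotProduct]
  simp only [XZGate, signedPerm, Equiv.coe_addRight, h, signChar, AddChar.zmodChar_apply']

theorem mem_pauliGroup_iff {P : QMat n} :
    P ∈ PauliGroup n ↔ ∃ c : ℂ, c ^ 4 = 1 ∧ ∃ u z, P = c • XZGate n u z := by
  have hc (c : ℂ) : c = 1 ∨ c = -1 ∨ c = Complex.I ∨ c = -Complex.I ↔ c ^ 4 = 1 := by
    rw [← sub_eq_zero (a := c ^ 4), show c ^ 4 - 1
      = (c - 1) * (c + 1) * ((c - Complex.I) * (c + Complex.I)) by
        linear_combination (c ^ 2 - 1) * Complex.I_sq]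
    simp only [mul_eq_zero, sub_eq_zero, add_eq_zero_iff_eq_neg, or_assoc]
  change (∃ c u z, _ ∧ _) ↔ _
  simp only [hc, exists_and_left]

theorem XZGate_mem_pauliGroup (u z : QV n) : XZGate n u z ∈ PauliGroup n :=
  mem_pauliGroup_iff.2 ⟨1, one_pow 4, u, z, (one_smul ..).symm⟩

theorem IsAffine.exists_eq_dotProduct {q : QV n → ZMod 2} (hq : IsAffine q) :
    ∃ z : QV n, ∀ x, q x = q 0 + z ⬝ᵥ x := by
  let φ : QV n →+ ZMod 2 := AddMonoidHom.mk' (fun x => q x - q 0) fun x y => by rw [hq]; abel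
  refine ⟨(dotProductEquiv (ZMod 2) (Fin n)).symm (φ.toZModLinearMap 2), fun x => ?_⟩
  have hφ : _ ⬝ᵥ x = q x - q 0 :=
    congr($((dotProductEquiv (ZMod 2) (Fin n)).apply_symm_apply (φ.toZModLinearMap 2)) x)
  rw [hφ, add_sub_cancel]

theorem isAffine_dotProduct (z : QV n) : IsAffine (z ⬝ᵥ ·) := fun x y => by
  simp [dotProduct_add]

theorem signedPerm_mem_pauliGroup_iff {g : QV n ≃ QV n} {q : QV n → ZMod 2} :
    signedPerm g q ∈ PauliGroup n ↔ (∃ u, ∀ x, g x = x + u) ∧ IsAffine q := by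
  constructor
  · rintro ⟨c, u, z, -, h⟩
    have hb (b : QV n) : g b = b + u ∧ signChar (q b) = c * signChar (z ⬝ᵥ b) := by
      have := congr($h (g b) b)
      by_cases hgb : g b = b + u
      · simpa [XZGate_eq_signedPerm, signedPerm, hgb] using this
      · exact absurd (by simpa [XZGate_eq_signedPerm, signedPerm, hgb] using this)
          (signChar_ne_zero (q b))
    have hc : signChar (q 0) = c := by simpa using (hb 0).2
    have hq : q = fun b => q 0 + z ⬝ᵥ b := funext fun b => signChar_injective <| by
      rw [AddChar.map_add_eq_mul, hc, (hb b).2]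
    refine ⟨⟨u, fun b => (hb b).1⟩, fun x y => ?_⟩
    rw [hq]
    simp only [dotProduct_add, dotProduct_zero]
    abel
  · rintro ⟨⟨u, hu⟩, hq⟩
    obtain ⟨z, hz⟩ := hq.exists_eq_dotProduct
    refine mem_pauliGroup_iff.2 ⟨signChar (q 0), signChar_pow_four _, u, z, ?_⟩
    rw [XZGate_eq_signedPerm, ← signedPerm_const_add, ← funext hz]
    congr 1
    exact Equiv.ext hu

end Pauli

section Hierarchy

variable {n k : ℕ} {U V : QMat n}

theorem smul_mem_pauliGroup {c : ℂ} (hc : c ^ 4 = 1) (hU : U ∈ PauliGroup n) :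
    c • U ∈ PauliGroup n := by
  obtain ⟨d, hd, u, z, rfl⟩ := mem_pauliGroup_iff.1 hU
  exact mem_pauliGroup_iff.2 ⟨c * d, by rw [mul_pow, hc, hd, one_mul], u, z, smul_smul ..⟩

theorem smul_mem_cliffordLevel {c : ℂ} (hc : c ^ 4 = 1) (hU : U ∈ CliffordLevel n k) :
    c • U ∈ CliffordLevel n k := by
  have hstar : star c * c = 1 := by
    simpa [Complex.norm_eq_one_of_pow_eq_one hc (by norm_num)] using Complex.conj_mul' c
  match k, hU with
  | 1, hU => exact smul_mem_pauliGroup hc hU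
  | k + 2, ⟨hU, hP⟩ =>
    have hconj (P : QMat n) : (c • U) * P * star (c • U) = U * P * star U := by
      simp only [star_smul, smul_mul_assoc, mul_smul_comm, smul_smul, hstar, one_smul]
    refine ⟨?_, fun P hP' => (hconj P).symm ▸ hP P hP'⟩
    have := hconj 1
    rwa [Matrix.mul_one, Matrix.mul_one, Matrix.mem_unitaryGroup_iff.1 hU,
      ← Matrix.mem_unitaryGroup_iff] at this

theorem mem_cliffordLevel_add_two_iff :
    U ∈ CliffordLevel n (k + 2) ↔ U ∈ Matrix.unitaryGroup (QV n) ℂ ∧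
      ∀ u z, U * XZGate n u z * star U ∈ CliffordLevel n (k + 1) := by
  refine and_congr_right fun _ => ⟨fun h u z => h _ (XZGate_mem_pauliGroup u z), fun h P hP => ?_⟩
  obtain ⟨c, hc, u, z, rfl⟩ := mem_pauliGroup_iff.1 hP
  rw [mul_smul_comm, smul_mul_assoc]
  exact smul_mem_cliffordLevel hc (h u z)

theorem finite_pauliGroup : (PauliGroup n).Finite := by
  have hphase := Set.toFinite ({1, -1, Complex.I, -Complex.I} : Set ℂ)
  refine ((hphase.prod (Set.finite_univ (α := QV n × QV n))).image
    fun p => p.1 • XZGate n p.2.1 p.2.2).subset ?_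
  rintro _ ⟨c, u, z, hc, rfl⟩
  exact ⟨(c, u, z), ⟨hc, trivial⟩, rfl⟩

theorem star_mem_cliffordLevel_two (hU : U ∈ CliffordLevel n 2) : star U ∈ CliffordLevel n 2 := by
  refine ⟨Unitary.star_mem hU.1, fun P hP => ?_⟩
  let conj := Unitary.conjStarAlgAut ℂ (QMat n) ⟨U, hU.1⟩
  have hbij : Set.BijOn conj (PauliGroup n) (PauliGroup n) :=
    (Set.Finite.injOn_iff_bijOn_of_mapsTo finite_pauliGroup fun P hP => hU.2 P hP).1
      conj.injective.injOn
  obtain ⟨Q, hQ, rfl⟩ := hbij.surjOn hP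
  have hUU := Matrix.mem_unitaryGroup_iff'.1 hU.1
  have : star U * (U * Q * star U) * star (star U) = star U * U * Q * (star U * U) := by
    simp only [star_star, mul_assoc]
  rw [hUU, Matrix.one_mul, Matrix.mul_one] at this
  exact this.symm ▸ hQ

theorem conj_mem_cliffordLevel (hV : V ∈ CliffordLevel n 2) (hU : U ∈ CliffordLevel n k) :
    V * U * star V ∈ CliffordLevel n k := by
  induction k using Nat.twoStepInduction generalizing U with
  | zero => exact hU
  | one => exact hV.2 U hU
  | more k _ ih =>
    refine ⟨mul_mem (mul_mem hV.1 hU.1) (Unitary.star_mem hV.1), fun P hP => ?_⟩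
    have := ih (hU.2 _ ((star_mem_cliffordLevel_two hV).2 P hP))
    simpa only [star_mul, star_star, mul_assoc] using this

theorem mul_mem_cliffordLevel_left (hV : V ∈ CliffordLevel n 2) (hU : U ∈ CliffordLevel n (k + 2)) :
    V * U ∈ CliffordLevel n (k + 2) := by
  refine ⟨mul_mem hV.1 hU.1, fun P hP => ?_⟩
  have := conj_mem_cliffordLevel hV (hU.2 P hP)
  simpa only [star_mul, mul_assoc] using this

theorem mul_mem_cliffordLevel_right (hU : U ∈ CliffordLevel n (k + 2))
    (hV : V ∈ CliffordLevel n 2) : U * V ∈ CliffordLevel n (k + 2) := by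
  refine ⟨mul_mem hU.1 hV.1, fun P hP => ?_⟩
  have := hU.2 _ (hV.2 P hP)
  simpa only [star_mul, mul_assoc] using this

theorem map_star_mem_cliffordLevel (hU : U ∈ CliffordLevel n k) :
    U.map star ∈ CliffordLevel n k := by
  have hpauli {P : QMat n} (hP : P ∈ PauliGroup n) : P.map star ∈ PauliGroup n := by
    obtain ⟨c, hc, u, z, rfl⟩ := mem_pauliGroup_iff.1 hP
    refine mem_pauliGroup_iff.2 ⟨star c, by rw [← star_pow, hc, star_one], u, z, ?_⟩
    rw [XZGate_eq_signedPerm, Matrix.map_smul' _ _ _ star_mul', map_star_signedPerm]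
  have hmul (A B : QMat n) : (A * B).map star = A.map star * B.map star :=
    Matrix.map_mul (f := starRingEnd ℂ)
  induction k using Nat.twoStepInduction generalizing U with
  | zero => exact hU
  | one => exact hpauli hU
  | more k _ ih =>
    refine ⟨Matrix.map_star_mem_unitaryGroup_iff.2 hU.1, fun P hP => ?_⟩
    have hstar : (star U).map star = star (U.map star) := rfl
    have hPP : (P.map star).map star = P := by
      ext
      simp
    have := ih (hU.2 _ (hpauli hP))
    rwa [hmul, hmul, hstar, hPP] at this

theorem IsSemiClifford.star_mem_cliffordLevel (hU : IsSemiClifford n U)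
    (hUk : U ∈ CliffordLevel n (k + 2)) : star U ∈ CliffordLevel n (k + 2) := by
  obtain ⟨φ₁, d, φ₂, h₁, h₂, hd, rfl⟩ := hU
  have h₁' := star_mem_cliffordLevel_two h₁
  have h₂' := star_mem_cliffordLevel_two h₂
  have hdk : d ∈ CliffordLevel n (k + 2) := by
    have := mul_mem_cliffordLevel_left h₁' (mul_mem_cliffordLevel_right hUk h₂')
    simpa only [mul_assoc, Matrix.mem_unitaryGroup_iff.1 h₂.1, Matrix.mul_one,
      ← mul_assoc (star φ₁), Matrix.mem_unitaryGroup_iff'.1 h₁.1, Matrix.one_mul] using this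
  have hstar : star d = d.map star := by
    ext a b
    rcases eq_or_ne a b with rfl | hab
    · rfl
    · simp [hd a b hab, hd b a hab.symm]
  rw [star_mul, star_mul, hstar]
  exact mul_mem_cliffordLevel_left h₂'
    (mul_mem_cliffordLevel_right (map_star_mem_cliffordLevel hdk) h₁')

end Hierarchy

section SignedPermLevels

variable {n : ℕ}

theorem signedPerm_conj_XZGate (g : QV n ≃ QV n) (q : QV n → ZMod 2) (u z : QV n) :
    signedPerm g q * XZGate n u z * star (signedPerm g q) =
      signedPerm ((g.symm.trans (Equiv.addRight u)).trans g)
        fun b => (q (g.symm b + u) - q (g.symm b)) + z ⬝ᵥ g.symm b := by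
  rw [star_signedPerm, XZGate_eq_signedPerm, signedPerm_mul, signedPerm_mul]
  congr 1
  ext b
  simp only [Equiv.coe_addRight, ZModModule.sub_eq_add]
  abel

theorem forall_exists_translation_iff_isAffine {g : QV n ≃ QV n} :
    (∀ u, ∃ w, ∀ b, g (g.symm b + u) = b + w) ↔ IsAffine g := by
  refine ⟨fun h x y => ?_, fun hg u => ⟨g u - g 0, fun b => ?_⟩⟩
  · obtain ⟨w, hw⟩ := h y
    have hx := hw (g x)
    have h0 := hw (g 0)
    rw [Equiv.symm_apply_apply] at hx h0
    rw [hx, ← zero_add y, h0]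
    abel
  · rw [hg, Equiv.apply_symm_apply]
    abel

theorem signedPerm_mem_cliffordLevel_two_iff {g : QV n ≃ QV n} {q : QV n → ZMod 2} :
    signedPerm g q ∈ CliffordLevel n 2 ↔ IsAffine g ∧ IsQuadratic q := by
  have key (u z : QV n) : signedPerm g q * XZGate n u z * star (signedPerm g q) ∈
      CliffordLevel n 1 ↔ (∃ w, ∀ b, g (g.symm b + u) = b + w) ∧
        IsAffine fun b => (q (g.symm b + u) - q (g.symm b)) + z ⬝ᵥ g.symm b := by
    rw [signedPerm_conj_XZGate]
    exact signedPerm_mem_pauliGroup_iff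
  rw [mem_cliffordLevel_add_two_iff]
  simp only [key, signedPerm_mem_unitaryGroup, true_and, ← forall_exists_translation_iff_isAffine]
  constructor
  · refine fun h => ⟨fun u => (h u 0).1, fun u => ?_⟩
    have hg := forall_exists_translation_iff_isAffine.1 fun u => (h u 0).1
    simpa using (h u 0).2.comp hg
  · rintro ⟨hg, hq⟩ u z
    have hg' := (forall_exists_translation_iff_isAffine.1 hg).symm
    exact ⟨hg u, ((hq u).add (isAffine_dotProduct z)).comp hg'⟩

theorem isQuadratic_iff_forall_dotProduct {G : Type*} [AddCommGroup G] {g : G → QV n} :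
    IsQuadratic g ↔ ∀ z, IsQuadratic (z ⬝ᵥ g ·) := by
  refine ⟨fun hg z u => ?_, fun hg u x y => funext fun i => ?_⟩
  · simpa only [dotProduct_sub] using (isAffine_dotProduct z).comp (hg u)
  · simpa using hg (Pi.single i 1) u x y

theorem permGate_mem_unitaryGroup (f : QV n ≃ QV n) :
    permGate n f ∈ Matrix.unitaryGroup (QV n) ℂ := by
  rw [permGate_eq_signedPerm]
  exact signedPerm_mem_unitaryGroup f 0

theorem permGate_mem_cliffordLevel_three_iff {f : QV n ≃ QV n} :
    permGate n f ∈ CliffordLevel n 3 ↔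
      (∀ u, IsAffine fun x => f (f.symm x + u)) ∧ IsQuadratic f.symm := by
  have key (u z : QV n) : permGate n f * XZGate n u z * star (permGate n f) ∈ CliffordLevel n 2 ↔
      IsAffine (fun b => f (f.symm b + u)) ∧ IsQuadratic fun b => z ⬝ᵥ f.symm b := by
    rw [permGate_eq_signedPerm, signedPerm_conj_XZGate, signedPerm_mem_cliffordLevel_two_iff]
    simp only [Pi.zero_apply, sub_zero, zero_add]
    rfl
  rw [mem_cliffordLevel_add_two_iff, isQuadratic_iff_forall_dotProduct]
  rw [and_iff_right (permGate_mem_unitaryGroup f)]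
  simp only [key]
  exact ⟨fun h => ⟨fun u => (h u 0).1, fun z => (h 0 z).2⟩, fun h u z => ⟨h.1 u, h.2 z⟩⟩

theorem star_permGate (f : QV n ≃ QV n) : star (permGate n f) = permGate n f.symm := by
  rw [permGate_eq_signedPerm, permGate_eq_signedPerm, star_signedPerm]
  rfl

theorem inv_permGate (f : QV n ≃ QV n) : (permGate n f)⁻¹ = permGate n f.symm := by
  rw [← star_permGate]
  apply Matrix.inv_eq_right_inv
  exact Matrix.mem_unitaryGroup_iff.1 (permGate_mem_unitaryGroup f)

end SignedPermLevels

section Coordinates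

variable {n : ℕ}

theorem stdBasis_eq_basisFun (i : Fin n) : stdBasis n i = Pi.basisFun (ZMod 2) (Fin n) i := by
  ext m
  simp [stdBasis, Pi.single_apply]

theorem sum_smul_stdBasis (w : QV n) : ∑ i, w i • stdBasis n i = w := by
  simp only [stdBasis_eq_basisFun]
  exact (Pi.basisFun (ZMod 2) (Fin n)).sum_repr w

theorem mlCoeff_eq_cubeSum (f : QV n → QV n) (m : Fin n) (T : Finset (Fin n)) :
    mlCoeff n (fun v => f v m) T = cubeSum f (stdBasis n) T m :=
  (Finset.sum_apply ..).symm

theorem IsCircleHom.inducedMul_eq {μ : QV n →ₗ[ZMod 2] QV n →ₗ[ZMod 2] QV n} {f : QV n ≃ QV n}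
    (h : IsCircleHom μ f) (hf : ∀ i, f (stdBasis n i) = stdBasis n i) (u v : QV n) :
    inducedMul n f u v = μ u v := by
  have hμ (i j : Fin n) : f (stdBasis n i + stdBasis n j) + stdBasis n i + stdBasis n j
      = μ (stdBasis n i) (stdBasis n j) := by
    rw [h, hf, hf, ← ZModModule.sub_eq_add, ← ZModModule.sub_eq_add]
    abel
  calc inducedMul n f u v
    _ = μ (∑ i, u i • stdBasis n i) (∑ j, v j • stdBasis n j) := by
      rw [LinearMap.map_sum₂]
      simp only [inducedMul, hμ, map_sum, map_smul, LinearMap.smul_apply, smul_smul,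
        mul_comm (u _)]
    _ = μ u v := by rw [sum_smul_stdBasis, sum_smul_stdBasis]

theorem IsStaircase.apply_eq_self {g : QV n → QV n} (hg : IsStaircase n g) {v : QV n}
    (hv : ∀ i j, i < j → v i * v j = 0) : g v = v := by
  obtain ⟨L, -, hL, -, rfl⟩ := hg
  beta_reduce
  induction L with
  | nil => rfl
  | cons t L ih =>
    have ht : tofFun n t.1 t.2.1 t.2.2 v = v := by
      ext m
      simp [tofFun, hv _ _ (hL t List.mem_cons_self).1]
    rw [List.foldl_cons, ht]
    exact ih fun s hs => hL s (List.mem_cons_of_mem t hs)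

theorem IsStaircase.apply_zero {g : QV n → QV n} (hg : IsStaircase n g) : g 0 = 0 :=
  hg.apply_eq_self fun _ _ _ => mul_zero 0

theorem IsStaircase.apply_stdBasis {g : QV n → QV n} (hg : IsStaircase n g) (i : Fin n) :
    g (stdBasis n i) = stdBasis n i :=
  hg.apply_eq_self fun j k hjk => by
    grind [stdBasis]

end Coordinates

section AdaptedBasis

theorem exists_basis_span_image_eq {ι K V : Type*} [DivisionRing K] [AddCommGroup V] [Module K V]
    (b : Module.Basis ι K V) (W : Submodule K V) :
    ∃ (b' : Module.Basis ι K V) (S : Set ι), Submodule.span K (b' '' S) = W := by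
  obtain ⟨W', hW'⟩ := W.exists_isCompl
  let bW := Module.Basis.ofVectorSpace K W
  let bSum := (bW.prod (Module.Basis.ofVectorSpace K W')).map (W.prodEquivOfIsCompl W' hW')
  let e := bSum.indexEquiv b
  refine ⟨bSum.reindex e, e '' Set.range Sum.inl, ?_⟩
  have hrange : bSum.reindex e '' (e '' Set.range Sum.inl) = W.subtype '' Set.range bW := by
    rw [← Set.image_comp, ← Set.range_comp, ← Set.range_comp]
    congr 1
    ext i
    simp [bSum]
  rw [hrange, Submodule.span_image, bW.span_eq, Submodule.map_subtype_top]

namespace IsCircleHom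

variable {ι V : Type*} [AddCommGroup V] [Module (ZMod 2) V]
  {μ : V →ₗ[ZMod 2] V →ₗ[ZMod 2] V} {f : V ≃ V}

theorem exists_linearMap_eq_mul (h : IsCircleHom μ f) (hμ : IsTwoStepNilpotent μ) :
    ∃ φ : V →ₗ[ZMod 2] V →ₗ[ZMod 2] V, ∀ x, φ x = μ (f x) := by
  refine ⟨(AddMonoidHom.mk' (fun x => μ (f x)) fun x y => ?_).toZModLinearMap 2, fun _ => rfl⟩
  have : μ (μ (f x) (f y)) = 0 := LinearMap.ext fun c => hμ _ _ c
  rw [h, map_add, map_add, this, add_zero]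

theorem eqOn_span (h : IsCircleHom μ f) {L : V →ₗ[ZMod 2] V} {s : Set V}
    (hs : ∀ w ∈ Submodule.span (ZMod 2) s, μ (f w) = 0) (hL : Set.EqOn f L s) :
    Set.EqOn f L (Submodule.span (ZMod 2) s) := fun w hw => by
  induction hw using Submodule.span_induction with
  | mem w hw => exact hL hw
  | zero => rw [h.map_zero, map_zero]
  | add v w hv _ ihv ihw => rw [h.map_add_of_mul_eq_zero (hs v hv), ihv, ihw, map_add]
  | smul c w _ ih =>
    match c with
    | 0 => rw [zero_smul, h.map_zero, map_zero]
    | 1 => rw [one_smul, ih]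

/-- `L` is the linear map agreeing with `f` on a basis adapted to the kernel of `x ↦ μ (f x)`. -/
theorem exists_adapted_basis [Finite ι] (h : IsCircleHom μ f) (hμ : IsTwoStepNilpotent μ)
    (e : Module.Basis ι (ZMod 2) V) :
    ∃ (b : Module.Basis ι (ZMod 2) V) (S : Set ι) (L : V ≃ₗ[ZMod 2] V),
      (∀ i ∈ S, ∀ x, f (x + b i) = f x + L (b i)) ∧
      ∀ i ∉ S, ∀ x, b.repr (L.symm (f x)) i = b.repr x i := by
  obtain ⟨φ, hφ⟩ := h.exists_linearMap_eq_mul hμ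
  obtain ⟨b, S, hS⟩ := exists_basis_span_image_eq e (LinearMap.ker φ)
  let L₀ := b.constr (ZMod 2) (f ∘ b)
  have hL₀ (i : ι) : L₀ (b i) = f (b i) := b.constr_basis ..
  have hφL : μ ∘ₗ L₀ = φ := b.ext fun i => by rw [LinearMap.comp_apply, hL₀, hφ]
  have hker : ∀ w ∈ Submodule.span (ZMod 2) (b '' S), μ (f w) = 0 := fun w hw => by
    rw [← hφ, ← LinearMap.mem_ker, ← hS]
    exact hw
  have hspan := h.eqOn_span hker (L := L₀) <| by
    rintro _ ⟨i, -, rfl⟩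
    exact (hL₀ i).symm
  have hinj : Function.Injective L₀ := by
    refine (injective_iff_map_eq_zero L₀).2 fun x hx => f.injective ?_
    have hxW : x ∈ Submodule.span (ZMod 2) (b '' S) := by
      rw [hS, LinearMap.mem_ker, ← hφL, LinearMap.comp_apply, hx, map_zero]
    rw [hspan hxW, hx, h.map_zero]
  have := Module.Finite.of_basis b
  let L := LinearEquiv.ofInjectiveEndo L₀ hinj
  refine ⟨b, S, L, fun i hi x => ?_, fun i hi x => ?_⟩
  · rw [add_comm, h.map_add_of_mul_eq_zero (hker _ (Submodule.subset_span ⟨i, hi, rfl⟩)), add_comm]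
    exact congrArg _ (hL₀ i).symm
  · have hmem : L.symm (f x) - x ∈ Submodule.span (ZMod 2) (b '' S) := by
      have hL : L₀ (L.symm (f x)) = f x := L.apply_symm_apply _
      rw [hS, LinearMap.mem_ker, map_sub, ← hφL, LinearMap.comp_apply, hL, hφL, hφ, sub_self]
    have := Finsupp.notMem_support_iff.1 fun hi' => hi (b.mem_span_image.1 hmem hi')
    rwa [map_sub, Finsupp.sub_apply, sub_eq_zero] at this

end IsCircleHom

end AdaptedBasis

section Hadamard

variable {n : ℕ}

theorem star_mul_semiconjBy {M : Type*} [Monoid M] [StarMul M] {U a b : M} (hU : U ∈ unitary M)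
    (h : SemiconjBy U a b) : SemiconjBy (star U) b a :=
  SemiconjBy.units_inv_symm_left (a := Unitary.toUnits ⟨U, hU⟩) h

theorem stdBasis_dotProduct (i : Fin n) (x : QV n) : stdBasis n i ⬝ᵥ x = x i := by
  rw [stdBasis_eq_basisFun, Pi.basisFun_apply, single_one_dotProduct]

theorem dotProduct_stdBasis (x : QV n) (i : Fin n) : x ⬝ᵥ stdBasis n i = x i := by
  rw [stdBasis_eq_basisFun, Pi.basisFun_apply, dotProduct_single_one]

theorem XZGate_zero_zero : XZGate n 0 0 = 1 := by
  rw [XZGate_eq_signedPerm, ← signedPerm_refl_zero]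
  congr 1
  · ext; simp
  · ext; simp

theorem XZGate_mul (u z u' z' : QV n) :
    XZGate n u z * XZGate n u' z' = signChar (z ⬝ᵥ u') • XZGate n (u + u') (z + z') := by
  simp only [XZGate_eq_signedPerm, signedPerm_mul, ← signedPerm_const_add]
  congr 1
  · ext1 b
    exact (add_assoc b u' u).trans (congrArg (b + ·) (add_comm u' u))
  · ext b
    simp only [Equiv.coe_addRight, dotProduct_add, add_dotProduct]
    abel

theorem XZGate_zero_left (z : QV n) :
    XZGate n 0 z = Matrix.diagonal fun b => signChar (z ⬝ᵥ b) := by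
  ext a b
  rcases eq_or_ne a b with rfl | hab
  · simp [XZGate_eq_signedPerm, signedPerm]
  · simp [XZGate_eq_signedPerm, signedPerm, hab]

theorem star_XZGate (u z : QV n) : star (XZGate n u z) = signChar (z ⬝ᵥ u) • XZGate n u z := by
  rw [XZGate_eq_signedPerm, star_signedPerm, ← signedPerm_const_add]
  congr 1
  · ext1 a
    simp [ZModModule.neg_eq_self]
  · ext a
    simp [ZModModule.neg_eq_self, dotProduct_add, add_comm]

theorem mem_cliffordLevel_two_of_semiconjBy {U : QMat n} (hU : U ∈ Matrix.unitaryGroup (QV n) ℂ)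
    (h : ∀ u z, ∃ P ∈ PauliGroup n, SemiconjBy U (XZGate n u z) P) : U ∈ CliffordLevel n 2 := by
  refine mem_cliffordLevel_add_two_iff.2 ⟨hU, fun u z => ?_⟩
  obtain ⟨P, hP, hUP⟩ := h u z
  rw [hUP.eq, mul_assoc, Matrix.mem_unitaryGroup_iff.1 hU, Matrix.mul_one]
  exact hP

/-- The Hadamard gate on the `i`-th qubit, in the form `(X + Z) / √2`. -/
noncomputable def hadamardGate (n : ℕ) (i : Fin n) : QMat n :=
  ((√2)⁻¹ : ℂ) • (XZGate n (stdBasis n i) 0 + XZGate n 0 (stdBasis n i))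

theorem hadamardGate_semiconjBy (i : Fin n) (u z : QV n) :
    SemiconjBy (hadamardGate n i) (XZGate n u z) (signChar (u i * z i) •
      XZGate n (Function.update u i (z i)) (Function.update z i (u i))) := by
  suffices (XZGate n (stdBasis n i) 0 + XZGate n 0 (stdBasis n i)) * XZGate n u z =
      signChar (u i * z i) • XZGate n (Function.update u i (z i)) (Function.update z i (u i)) *
        (XZGate n (stdBasis n i) 0 + XZGate n 0 (stdBasis n i)) by
    rw [SemiconjBy, hadamardGate, smul_mul_assoc, this, mul_smul_comm]
  simp only [add_mul, mul_add, smul_mul_assoc, XZGate_mul, stdBasis_dotProduct,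
    dotProduct_stdBasis, zero_dotProduct, dotProduct_zero, Function.update_self, zero_add, add_zero,
    AddChar.map_zero_eq_one, one_smul, smul_smul, ← AddChar.map_add_eq_mul]
  rcases eq_or_ne (u i) (z i) with h | h
  · have hu : Function.update u i (z i) = u := by rw [← h, Function.update_eq_self]
    have hz : Function.update z i (u i) = z := by rw [h, Function.update_eq_self]
    have hmul : u i * z i = u i := by
      rw [← h, ← sq, ZMod.pow_card]
    rw [hu, hz, hmul, ZModModule.add_self, AddChar.map_zero_eq_one, one_smul, add_comm u,
      add_comm z]
  · have h1 : z i = u i + 1 := (by decide : ∀ a b : ZMod 2, a ≠ b → b = a + 1) _ _ h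
    have h2 : u i = z i + 1 := (by decide : ∀ a b : ZMod 2, a ≠ b → a = b + 1) _ _ h
    have hmul : u i * z i = 0 := (by decide : ∀ a b : ZMod 2, a ≠ b → a * b = 0) _ _ h
    have hu : Function.update u i (z i) = u + stdBasis n i := by
      ext m
      by_cases hm : m = i <;> simp [stdBasis, hm, h1]
    have hz : Function.update z i (u i) = z + stdBasis n i := by
      ext m
      by_cases hm : m = i <;> simp [stdBasis, hm, h2]
    have hcancel (x : QV n) : x + stdBasis n i + stdBasis n i = x := by
      rw [add_assoc, ZModModule.add_self, add_zero]
    rw [hu, hz, hmul, hcancel, hcancel, zero_add, AddChar.map_zero_eq_one, one_smul,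
      add_comm u, add_comm z, add_comm]

theorem hadamardGate_mem_unitaryGroup (i : Fin n) :
    hadamardGate n i ∈ Matrix.unitaryGroup (QV n) ℂ := by
  have hstar : star (hadamardGate n i) = hadamardGate n i := by
    simp only [hadamardGate, star_smul, star_add, star_XZGate, dotProduct_zero,
      zero_dotProduct]
    simp
  have hsq : ((√2 : ℂ)⁻¹ * (√2 : ℂ)⁻¹) * 2 = 1 := by
    rw [← mul_inv, ← Complex.ofReal_mul, Real.mul_self_sqrt zero_le_two]
    norm_num
  have hself : stdBasis n i i = 1 := if_pos rfl
  rw [Matrix.mem_unitaryGroup_iff, hstar, hadamardGate, smul_mul_smul_comm]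
  simp only [add_mul, mul_add, XZGate_mul, zero_dotProduct, stdBasis_dotProduct,
    ZModModule.add_self, add_zero, zero_add, XZGate_zero_zero, Pi.zero_apply, hself, signChar_one,
    AddChar.map_zero_eq_one, one_smul]
  rw [neg_one_smul, add_assoc, neg_add_cancel_left, ← two_smul ℂ (1 : QMat n), smul_smul, hsq,
    one_smul]

theorem hadamardGate_mem_cliffordLevel_two (i : Fin n) : hadamardGate n i ∈ CliffordLevel n 2 :=
  mem_cliffordLevel_two_of_semiconjBy (hadamardGate_mem_unitaryGroup i) fun u z =>
    ⟨_, smul_mem_pauliGroup (signChar_pow_four _) (XZGate_mem_pauliGroup _ _),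
      hadamardGate_semiconjBy i u z⟩

theorem exists_cliffordLevel_two_swap (S : Finset (Fin n)) :
    ∃ p ∈ CliffordLevel n 2, ∀ u z, ∃ c : ℂ,
      SemiconjBy p (XZGate n u z) (c • XZGate n (S.piecewise z u) (S.piecewise u z)) := by
  induction S using Finset.induction_on with
  | empty =>
    refine ⟨1, ?_, fun u z => ⟨1, ?_⟩⟩
    · exact mem_cliffordLevel_two_of_semiconjBy (one_mem _) fun u z =>
        ⟨_, XZGate_mem_pauliGroup u z, SemiconjBy.one_left _⟩
    · simp
  | insert i S hi ih =>
    obtain ⟨p, hp, h⟩ := ih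
    refine ⟨hadamardGate n i * p,
      mul_mem_cliffordLevel_left (hadamardGate_mem_cliffordLevel_two i) hp, fun u z => ?_⟩
    obtain ⟨c, hc⟩ := h u z
    have hi' (x y : QV n) : S.piecewise x y i = y i := S.piecewise_eq_of_notMem x y hi
    have := ((hadamardGate_semiconjBy i _ _).smul_right c).mul_left hc
    rw [hi', hi', smul_smul, ← Finset.piecewise_insert, ← Finset.piecewise_insert] at this
    exact ⟨_, this⟩

theorem isDiagonal_of_commute {D : QMat n} (hD : ∀ i, Commute D (XZGate n 0 (stdBasis n i))) :
    IsDiagonal n D := fun a b hab => by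
  obtain ⟨i, hi⟩ := Function.ne_iff.1 hab
  have h := congr($((hD i).eq) a b)
  simp only [XZGate_zero_left, Matrix.mul_diagonal, Matrix.diagonal_mul,
    stdBasis_dotProduct] at h
  rw [mul_comm, mul_eq_mul_right_iff] at h
  exact h.resolve_left fun h => hi (signChar_injective h.symm)

theorem piecewise_stdBasis_zero (S : Finset (Fin n)) (i : Fin n) :
    S.piecewise (stdBasis n i) 0 = if i ∈ S then stdBasis n i else 0 := by
  ext m
  split_ifs <;> rcases eq_or_ne m i with rfl | hm <;> simp [Finset.piecewise, stdBasis, *]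

theorem piecewise_zero_stdBasis (S : Finset (Fin n)) (i : Fin n) :
    S.piecewise 0 (stdBasis n i) = if i ∈ S then 0 else stdBasis n i := by
  ext m
  split_ifs <;> rcases eq_or_ne m i with rfl | hm <;> simp [Finset.piecewise, stdBasis, *]

theorem permGate_commute_XZGate {g : QV n ≃ QV n} {u z : QV n} (hu : ∀ x, g (x + u) = g x + u)
    (hz : ∀ x, z ⬝ᵥ g x = z ⬝ᵥ x) : Commute (permGate n g) (XZGate n u z) := by
  rw [Commute, SemiconjBy, permGate_eq_signedPerm, XZGate_eq_signedPerm, signedPerm_mul,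
    signedPerm_mul]
  congr 1
  · exact Equiv.ext hu
  · ext x
    simp [hz]

theorem isSemiClifford_permGate {g : QV n ≃ QV n} {S : Set (Fin n)}
    (hX : ∀ i ∈ S, ∀ x, g (x + stdBasis n i) = g x + stdBasis n i)
    (hZ : ∀ i ∉ S, ∀ x, g x i = x i) : IsSemiClifford n (permGate n g) := by
  classical
  obtain ⟨p, hp, h⟩ := exists_cliffordLevel_two_swap S.toFinset
  have hpp := Matrix.mem_unitaryGroup_iff.1 hp.1
  refine ⟨p, star p * permGate n g * p, star p, hp, star_mem_cliffordLevel_two hp,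
    isDiagonal_of_commute fun i => ?_, ?_⟩
  · obtain ⟨c, hc⟩ := h 0 (stdBasis n i)
    have hg : Commute (permGate n g) (c • XZGate n (S.toFinset.piecewise (stdBasis n i) 0)
        (S.toFinset.piecewise 0 (stdBasis n i))) := by
      refine (permGate_commute_XZGate (fun x => ?_) fun x => ?_).smul_right c
      · rw [piecewise_stdBasis_zero]
        split_ifs with hi
        · exact hX i (Set.mem_toFinset.1 hi) x
        · rw [add_zero, add_zero]
      · rw [piecewise_zero_stdBasis]
        split_ifs with hi
        · rw [zero_dotProduct, zero_dotProduct]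
        · simpa only [stdBasis_dotProduct] using hZ i (mt Set.mem_toFinset.2 hi) x
    exact ((star_mul_semiconjBy hp.1 hc).mul_left hg).mul_left hc
  · simp only [mul_assoc, hpp, Matrix.mul_one]
    rw [← mul_assoc, hpp, Matrix.one_mul]

theorem IsSemiClifford.mul_mul {U V W : QMat n} (hU : U ∈ CliffordLevel n 2)
    (hV : IsSemiClifford n V) (hW : W ∈ CliffordLevel n 2) : IsSemiClifford n (U * V * W) := by
  obtain ⟨φ₁, d, φ₂, h₁, h₂, hd, rfl⟩ := hV
  refine ⟨U * φ₁, d, φ₂ * W, mul_mem_cliffordLevel_left hU h₁, mul_mem_cliffordLevel_left h₂ hW,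
    hd, ?_⟩
  simp only [mul_assoc]

theorem permGate_trans (f g : QV n ≃ QV n) :
    permGate n (f.trans g) = permGate n g * permGate n f := by
  simp only [permGate_eq_signedPerm, signedPerm_mul]
  congr 1

theorem permGate_linearEquiv_mem_cliffordLevel_two (L : QV n ≃ₗ[ZMod 2] QV n) :
    permGate n L.toEquiv ∈ CliffordLevel n 2 := by
  rw [permGate_eq_signedPerm, signedPerm_mem_cliffordLevel_two_iff]
  exact ⟨fun x y => by simp, fun u x y => by simp⟩

theorem IsCircleHom.isSemiClifford {μ : QV n →ₗ[ZMod 2] QV n →ₗ[ZMod 2] QV n} {f : QV n ≃ QV n}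
    (h : IsCircleHom μ f) (hμ : IsTwoStepNilpotent μ) : IsSemiClifford n (permGate n f) := by
  obtain ⟨b, S, L, hbS, hbS'⟩ := h.exists_adapted_basis hμ (Pi.basisFun (ZMod 2) (Fin n))
  let B := b.equivFun
  let g : QV n ≃ QV n := B.symm.toEquiv.trans (f.trans (L.symm.trans B).toEquiv)
  have hg : IsSemiClifford n (permGate n g) := by
    refine isSemiClifford_permGate (S := S) (fun i hi x => ?_) fun i hi x => ?_
    · have hBi : B.symm (stdBasis n i) = b i := by
        rw [B.symm_apply_eq]
        ext j
        simp [B, stdBasis, eq_comm]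
      have hB : B (b i) = stdBasis n i := (B.symm_apply_eq.1 hBi).symm
      change B (L.symm (f (B.symm (x + stdBasis n i)))) = B (L.symm (f (B.symm x))) + stdBasis n i
      rw [map_add, hBi, hbS i hi, map_add, L.symm_apply_apply, map_add, hB]
    · exact (hbS' i hi (B.symm x)).trans (congrFun (B.apply_symm_apply x) i)
  have hf : f = B.toEquiv.trans (g.trans (B.symm.trans L).toEquiv) := by
    ext1 x
    simp [g]
  rw [hf, permGate_trans, permGate_trans]
  exact hg.mul_mul (permGate_linearEquiv_mem_cliffordLevel_two _)
    (permGate_linearEquiv_mem_cliffordLevel_two _)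

end Hadamard

theorem stmt17_general (n : ℕ) (f : QV n ≃ QV n) (hf : permGate n f ∈ CliffordLevel n 3)
    (h0 : f 0 = 0) (hbasis : ∀ i, f (stdBasis n i) = stdBasis n i) :
    List.TFAE [
      IsSemiClifford n (permGate n f),
      (permGate n f)⁻¹ ∈ CliffordLevel n 3,
      ∀ (m : Fin n) (T : Finset (Fin n)), mlCoeff n (fun v => f v m) T ≠ 0 → T.card ≤ 2,
      ∀ i j l : Fin n, inducedMul n f (inducedMul n f (stdBasis n i) (stdBasis n j))
        (stdBasis n l) = 0] := by
  obtain ⟨μ, hμ⟩ := exists_isCircleHom h0 (permGate_mem_cliffordLevel_three_iff.1 hf).1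
  have h2 : (permGate n f)⁻¹ ∈ CliffordLevel n 3 ↔ IsTwoStepNilpotent μ := by
    rw [inv_permGate, permGate_mem_cliffordLevel_three_iff, Equiv.symm_symm,
      ← hμ.isTwoStepNilpotent_iff_isQuadratic]
    exact and_iff_right_of_imp fun h => hμ.isAffine_symm_conj h
  have h3 : (∀ m T, mlCoeff n (fun v => f v m) T ≠ 0 → T.card ≤ 2) ↔ IsTwoStepNilpotent μ := by
    rw [hμ.isTwoStepNilpotent_iff_cubeSum (Pi.basisFun (ZMod 2) (Fin n)) fun i => by
      rw [hbasis, stdBasis_eq_basisFun]]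
    simp only [mlCoeff_eq_cubeSum, ← not_lt, not_imp_not, funext_iff, Pi.zero_apply]
    exact ⟨fun h T hT m => h m T hT, fun h m T hT => h T hT m⟩
  have h4 : (∀ i j l, inducedMul n f (inducedMul n f (stdBasis n i) (stdBasis n j))
      (stdBasis n l) = 0) ↔ IsTwoStepNilpotent μ := by
    simp only [hμ.inducedMul_eq hbasis, stdBasis_eq_basisFun]
    exact (isTwoStepNilpotent_iff_basis (Pi.basisFun (ZMod 2) (Fin n))).symm
  rw [← h3] at h2 h4
  tfae_have 1 → 2 := fun h => by
    rw [inv_permGate, ← star_permGate]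
    exact h.star_mem_cliffordLevel hf
  tfae_have 2 ↔ 3 := h2
  tfae_have 4 ↔ 3 := h4
  tfae_have 3 → 1 := fun h => hμ.isSemiClifford (h3.1 h)
  tfae_finish

/-- For a staircase-form permutation gate `π ∈ 𝒞₃` with induced
descending multiplication `eᵢeⱼ := π(eᵢ+eⱼ)+eᵢ+eⱼ`, the following are equivalent:
(1) `π` is semi-Clifford; (2) `π⁻¹ ∈ 𝒞₃`; (3) every coordinate of the polynomial
representation of `π` has degree at most 2; (4) `eᵢeⱼeₗ = 0` for all `i,j,l`. -/
theorem stmt17 (n : ℕ) (hn : 1 ≤ n) (f : QV n ≃ QV n)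
    (hf : permGate n f ∈ CliffordLevel n 3) (hst : IsStaircase n ⇑f) :
    (IsSemiClifford n (permGate n f) ↔ (permGate n f)⁻¹ ∈ CliffordLevel n 3) ∧
    ((permGate n f)⁻¹ ∈ CliffordLevel n 3 ↔
      (∀ (m : Fin n) (T : Finset (Fin n)),
        mlCoeff n (fun v => f v m) T ≠ 0 → T.card ≤ 2)) ∧
    ((∀ (m : Fin n) (T : Finset (Fin n)),
        mlCoeff n (fun v => f v m) T ≠ 0 → T.card ≤ 2) ↔
      (∀ i j l : Fin n,
        inducedMul n ⇑f (inducedMul n ⇑f (stdBasis n i) (stdBasis n j)) (stdBasis n l)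
          = 0)) := by
  have h := stmt17_general n f hf hst.apply_zero hst.apply_stdBasis
  exact ⟨h.out 0 1, h.out 1 2, h.out 2 3⟩
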